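/- arXiv:1506.08666 — 3 statements merged into one kernel-verified Lean document; each statement's English description precedes it below -/
import Mathlib

section
/- In the algebra □̃_q, for each i ∈ ℤ/4ℤ the following hold: (i) x_{i+1} S_i = q⁴ S_i x_{i+1}, and (ii) x_{i−1} S_i = q⁻⁴ S_i x_{i−1}. -/
/-!
Put `u = x_i`, `v = x_{i+2}` and `p = q` (resp. `p = q⁻¹`). The `q`-Weyl relations say that
`y = x_{i+1}` (resp. `y = x_{i-1}`) passes `u` and `v` up to a scalar and a central error:
`y u = p² u y + (1 - p²) c` and `y v = p⁻² v y + (1 - p⁻²) d`. Every monomial of `S_i` contains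
`u` three times and `v` once, so moving `y` through it gives the factor `p⁶ p⁻² = p⁴`.
The error terms `c · u²v, c · uvu, c · vu²` and `d · u³` cancel because
`[3]_p = p² + 1 + p⁻²` (for instance the coefficient of `d · u³` is proportional to
`p⁶ - [3]_p p⁴ + [3]_p p² - 1 = 0`). This is `qSerre_skew_commute`. Since `[3]_q = [3]_{q⁻¹}`,
it applies to both neighbours of `x_i`.
-/


noncomputable section

/-- The `q`-Serre expression `u³v − [3]_q u²vu + [3]_q uvu² − vu³`,
where `[3]_q = (q³ − q⁻³)/(q − q⁻¹)`. -/
def qSerre {F : Type*} [Field F] (q : F) {A : Type*} [Ring A] [Algebra F A] (u v : A) : A :=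
  u ^ 3 * v - ((q ^ 3 - q⁻¹ ^ 3) / (q - q⁻¹)) • (u ^ 2 * v * u)
    + ((q ^ 3 - q⁻¹ ^ 3) / (q - q⁻¹)) • (u * v * u ^ 2) - v * u ^ 3
/-- Generator indices for `□̃_q`: `Sum.inl i` is `x_i`, `Sum.inr (Sum.inl i)` is `c_i`,
and `Sum.inr (Sum.inr i)` is `c_i⁻¹`. -/
abbrev BTGen := (ZMod 4) ⊕ ((ZMod 4) ⊕ (ZMod 4))

/-- The free generator corresponding to `x_i`. -/
def btx (F : Type*) [Field F] (i : ZMod 4) : FreeAlgebra F BTGen :=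
  FreeAlgebra.ι F (Sum.inl i)

/-- The free generator corresponding to `c_i`. -/
def btc (F : Type*) [Field F] (i : ZMod 4) : FreeAlgebra F BTGen :=
  FreeAlgebra.ι F (Sum.inr (Sum.inl i))

/-- The free generator corresponding to `c_i⁻¹`. -/
def btcinv (F : Type*) [Field F] (i : ZMod 4) : FreeAlgebra F BTGen :=
  FreeAlgebra.ι F (Sum.inr (Sum.inr i))

/-- The defining relations of the algebra `□̃_q`. -/
inductive BoxTRel (F : Type*) [Field F] (q : F) :
    FreeAlgebra F BTGen → FreeAlgebra F BTGen → Prop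
  | c_cinv (i : ZMod 4) : BoxTRel F q (btc F i * btcinv F i) 1
  | cinv_c (i : ZMod 4) : BoxTRel F q (btcinv F i * btc F i) 1
  | central_c (i : ZMod 4) (a : FreeAlgebra F BTGen) : BoxTRel F q (btc F i * a) (a * btc F i)
  | central_cinv (i : ZMod 4) (a : FreeAlgebra F BTGen) :
      BoxTRel F q (btcinv F i * a) (a * btcinv F i)
  | weyl (i : ZMod 4) : BoxTRel F q
      ((q - q⁻¹)⁻¹ • (q • (btx F i * btx F (i + 1)) - q⁻¹ • (btx F (i + 1) * btx F i)))
      (btc F i)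

/-- The algebra `□̃_q`. -/
abbrev BoxT (F : Type*) [Field F] (q : F) := RingQuot (BoxTRel F q)

/-- The generators `x_i` of `□̃_q`. -/
def xT (F : Type*) [Field F] (q : F) (i : ZMod 4) : BoxT F q :=
  RingQuot.mkAlgHom F (BoxTRel F q) (btx F i)

/-- The central generators `c_i` of `□̃_q`. -/
def cT (F : Type*) [Field F] (q : F) (i : ZMod 4) : BoxT F q :=
  RingQuot.mkAlgHom F (BoxTRel F q) (btc F i)

/-- The central generators `c_i⁻¹` of `□̃_q`. -/
def cinvT (F : Type*) [Field F] (q : F) (i : ZMod 4) : BoxT F q :=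
  RingQuot.mkAlgHom F (BoxTRel F q) (btcinv F i)

/-- The element `S_i = x_i³ x_{i+2} − [3]_q x_i² x_{i+2} x_i + [3]_q x_i x_{i+2} x_i²
− x_{i+2} x_i³` of `□̃_q`. -/
def Sg (F : Type*) [Field F] (q : F) (i : ZMod 4) : BoxT F q :=
  qSerre q (xT F q i) (xT F q (i + 2))

lemma three_eq {F : Type*} [Field F] {q : F} (hq : q ≠ 0) (hq2 : q ^ 2 ≠ 1) :
    (q ^ 3 - q⁻¹ ^ 3) / (q - q⁻¹) = q ^ 2 + 1 + q⁻¹ ^ 2 := by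
  have h : q - q⁻¹ ≠ 0 := by
    intro h
    apply hq2
    have h' : q = q⁻¹ := sub_eq_zero.mp h
    calc q ^ 2 = q * q := sq q
      _ = q * q⁻¹ := congrArg (q * ·) h'
      _ = 1 := mul_inv_cancel₀ hq
  rw [div_eq_iff h]
  field_simp
  ring

/-- An element that skew-commutes with `u` by `p²` and with `v` by `p⁻²`, up to central error
terms vanishing at `p² = 1`, skew-commutes with the `q`-Serre expression in `u, v` by `p⁴`. -/
lemma qSerre_skew_commute {F A : Type*} [Field F] [Ring A] [Algebra F A] {q p : F} (hp : p ≠ 0)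
    (h3 : (q ^ 3 - q⁻¹ ^ 3) / (q - q⁻¹) = p ^ 2 + 1 + p⁻¹ ^ 2) {u v y c d : A}
    (hc : ∀ a, a * c = c * a) (hd : ∀ a, a * d = d * a)
    (hu : y * u = p ^ 2 • (u * y) + (1 - p ^ 2) • c)
    (hv : y * v = p⁻¹ ^ 2 • (v * y) + (1 - p⁻¹ ^ 2) • d) :
    y * qSerre q u v = p ^ 4 • (qSerre q u v * y) := by
  have hu' (t : A) : y * (u * t) = p ^ 2 • (u * (y * t)) + (1 - p ^ 2) • (c * t) := by
    rw [← mul_assoc, hu, add_mul, smul_mul_assoc, smul_mul_assoc, mul_assoc]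
  have hv' (t : A) : y * (v * t) = p⁻¹ ^ 2 • (v * (y * t)) + (1 - p⁻¹ ^ 2) • (d * t) := by
    rw [← mul_assoc, hv, add_mul, smul_mul_assoc, smul_mul_assoc, mul_assoc]
  have hcu (t : A) : u * (c * t) = c * (u * t) := by rw [← mul_assoc, hc, mul_assoc]
  have hcv (t : A) : v * (c * t) = c * (v * t) := by rw [← mul_assoc, hc, mul_assoc]
  have hdu (t : A) : u * (d * t) = d * (u * t) := by rw [← mul_assoc, hd, mul_assoc]
  have hcu1 := hc u
  have hcv1 := hc v
  have hdu1 := hd u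
  rw [qSerre, h3]
  simp only [pow_succ u, pow_zero, one_mul, mul_assoc, mul_add, mul_sub, add_mul, sub_mul,
    mul_smul_comm, smul_mul_assoc, hu', hv', hu, hv, hcu, hcv, hdu, hcu1, hcv1, hdu1]
  match_scalars <;> field_simp <;> ring

lemma cT_central {F : Type*} [Field F] {q : F} (i : ZMod 4) (a : BoxT F q) :
    a * cT F q i = cT F q i * a := by
  obtain ⟨b, rfl⟩ := RingQuot.mkAlgHom_surjective F (BoxTRel F q) a
  simpa only [map_mul, cT] using
    (RingQuot.mkAlgHom_rel F (BoxTRel.central_c (q := q) i b)).symm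

/-- The `q`-Weyl relation between consecutive generators, cleared of denominators. -/
lemma xT_weyl {F : Type*} [Field F] {q : F} (hq : q ≠ 0) (hq2 : q ^ 2 ≠ 1) (i : ZMod 4) :
    q • (xT F q i * xT F q (i + 1)) - q⁻¹ • (xT F q (i + 1) * xT F q i)
      = (q - q⁻¹) • cT F q i := by
  have h : q - q⁻¹ ≠ 0 := by
    intro h
    apply hq2
    have h' : q = q⁻¹ := sub_eq_zero.mp h
    calc q ^ 2 = q * q := sq q
      _ = q * q⁻¹ := congrArg (q * ·) h'
      _ = 1 := mul_inv_cancel₀ hq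
  have hw := RingQuot.mkAlgHom_rel F (BoxTRel.weyl (F := F) (q := q) i)
  simp only [map_smul, map_sub, map_mul] at hw
  exact (inv_smul_eq_iff₀ h).mp hw

/-- Moving `x_{i+1}` to the right of `x_i`. -/
lemma xT_succ_mul {F : Type*} [Field F] {q : F} (hq : q ≠ 0) (hq2 : q ^ 2 ≠ 1) (i : ZMod 4) :
    xT F q (i + 1) * xT F q i
      = q ^ 2 • (xT F q i * xT F q (i + 1)) + (1 - q ^ 2) • cT F q i := by
  have h := congrArg (q • ·) (xT_weyl hq hq2 i)
  simp only [smul_sub, smul_smul, mul_inv_cancel₀ hq, one_smul] at h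
  rw [sub_eq_iff_eq_add] at h
  rw [← sub_eq_iff_eq_add'.mpr h]
  match_scalars <;> field_simp <;> ring

/-- Moving `x_i` to the right of `x_{i+1}`. -/
lemma xT_mul_succ {F : Type*} [Field F] {q : F} (hq : q ≠ 0) (hq2 : q ^ 2 ≠ 1) (i : ZMod 4) :
    xT F q i * xT F q (i + 1)
      = q⁻¹ ^ 2 • (xT F q (i + 1) * xT F q i) + (1 - q⁻¹ ^ 2) • cT F q i := by
  rw [xT_succ_mul hq hq2 i]
  match_scalars <;> field_simp <;> ring

/-- Proposition 7.3: in `□̃_q`, `x_{i+1} S_i = q⁴ S_i x_{i+1}` and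
`x_{i−1} S_i = q⁻⁴ S_i x_{i−1}`. -/
theorem stmt9 (F : Type*) [Field F] (q : F) (hq : q ≠ 0) (hq2 : q ^ 2 ≠ 1) (i : ZMod 4) :
    xT F q (i + 1) * Sg F q i = (q ^ 4) • (Sg F q i * xT F q (i + 1)) ∧
    xT F q (i - 1) * Sg F q i = (q⁻¹ ^ 4) • (Sg F q i * xT F q (i - 1)) := by
  have hi : i - 1 + 1 = i := sub_add_cancel i 1
  have h2 : i + 1 + 1 = i + 2 := by ring
  -- The indices live in `ℤ/4ℤ`, so `x_{i-1}` is also the successor of `x_{i+2}`.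
  have h3 : i + 2 + 1 = i - 1 := by revert i; decide
  constructor
  · refine qSerre_skew_commute hq (three_eq hq hq2) (cT_central i) (cT_central (i + 1))
      (xT_succ_mul hq hq2 i) ?_
    have := xT_mul_succ hq hq2 (i + 1)
    rwa [h2] at this
  · refine qSerre_skew_commute (inv_ne_zero hq) ?_ (cT_central (i - 1)) (cT_central (i + 2)) ?_ ?_
    · rw [three_eq hq hq2, inv_inv]
      ring
    · have := xT_mul_succ hq hq2 (i - 1)
      rwa [hi] at this
    · have := xT_succ_mul hq hq2 (i + 2)
      rw [h3] at this
      rwa [inv_inv]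
end
end

section
/- Let Ĉ denote the subalgebra of □̂_q generated by the c_i^{±1} (i ∈ ℤ/4ℤ), and let α₀, α₁, α₂, α₃ be elements of Ĉ such that α₀ α₁ c₀ = 1 and α₂ α₃ c₂ = 1. Then there exists an F-algebra homomorphism ♮ : O_q → □̂_q that sends A ↦ α₀ x₀ + α₁ x₁ and B ↦ α₂ x₂ + α₃ x₃. -/
/-!
Put `X = α₀x₀`, `Y = α₁x₁`, `Z = α₂x₂`, `W = α₃x₃`. Since the `αᵢ` are central, the normalizations
`α₀α₁c₀ = 1` and `α₂α₃c₂ = 1` turn the defining relations of `□̂_q` into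
`(qXY - q⁻¹YX)/(q - q⁻¹) = 1 = (qZW - q⁻¹WZ)/(q - q⁻¹)`, while the same `q`-commutators of
`(Y, Z)` and `(W, X)` are central elements `d` and `e`; the pairs `X, Z` and `Y, W` still satisfy
the `q`-Serre relations (`qSerre_central_mul`, `qComm_central_mul`).

The first `q`-Dolan/Grady relation for `X + Y` and `Z + W` is linear in `Z + W`. Moving `Y` to the
left in words containing `Z`, and `X` to the right in words containing `W`, and then applying
`q`-Serre to `X³Z` and `Y³W`, gives a normal form in which both sides agree
(`dolanGrady_of_qWeyl`). The second relation is the first one after the cyclic shift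
`(X, Y, Z, W) ↦ (Z, W, X, Y)`.
-/

noncomputable section

/-- The defining relations (`q`-Dolan/Grady relations) of the `q`-Onsager algebra. -/
inductive OnsagerRel (F : Type*) [Field F] (q : F) :
    FreeAlgebra F (Fin 2) → FreeAlgebra F (Fin 2) → Prop
  | DG1 : OnsagerRel F q (qSerre q (FreeAlgebra.ι F 0) (FreeAlgebra.ι F 1))
      (((q ^ 2 - q⁻¹ ^ 2) ^ 2) •
        (FreeAlgebra.ι F 1 * FreeAlgebra.ι F 0 - FreeAlgebra.ι F 0 * FreeAlgebra.ι F 1))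
  | DG2 : OnsagerRel F q (qSerre q (FreeAlgebra.ι F 1) (FreeAlgebra.ι F 0))
      (((q ^ 2 - q⁻¹ ^ 2) ^ 2) •
        (FreeAlgebra.ι F 0 * FreeAlgebra.ι F 1 - FreeAlgebra.ι F 1 * FreeAlgebra.ι F 0))

/-- The `q`-Onsager algebra `O_q`. -/
abbrev Onsager (F : Type*) [Field F] (q : F) := RingQuot (OnsagerRel F q)

/-- The generator `A` of `O_q`. -/
def Ag (F : Type*) [Field F] (q : F) : Onsager F q :=
  RingQuot.mkAlgHom F (OnsagerRel F q) (FreeAlgebra.ι F 0)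

/-- The generator `B` of `O_q`. -/
def Bg (F : Type*) [Field F] (q : F) : Onsager F q :=
  RingQuot.mkAlgHom F (OnsagerRel F q) (FreeAlgebra.ι F 1)
/-- Generator indices for `□̂_q`: `Sum.inl i` is `x_i`, `Sum.inr (Sum.inl i)` is `c_i`,
and `Sum.inr (Sum.inr i)` is `c_i⁻¹`. -/
abbrev BHGen := (ZMod 4) ⊕ ((ZMod 4) ⊕ (ZMod 4))

/-- The free generator corresponding to `x_i`. -/
def bhx (F : Type*) [Field F] (i : ZMod 4) : FreeAlgebra F BHGen :=
  FreeAlgebra.ι F (Sum.inl i)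

/-- The free generator corresponding to `c_i`. -/
def bhc (F : Type*) [Field F] (i : ZMod 4) : FreeAlgebra F BHGen :=
  FreeAlgebra.ι F (Sum.inr (Sum.inl i))

/-- The free generator corresponding to `c_i⁻¹`. -/
def bhcinv (F : Type*) [Field F] (i : ZMod 4) : FreeAlgebra F BHGen :=
  FreeAlgebra.ι F (Sum.inr (Sum.inr i))

/-- The defining relations of the algebra `□̂_q`. -/
inductive BoxHRel (F : Type*) [Field F] (q : F) :
    FreeAlgebra F BHGen → FreeAlgebra F BHGen → Prop
  | c_cinv (i : ZMod 4) : BoxHRel F q (bhc F i * bhcinv F i) 1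
  | cinv_c (i : ZMod 4) : BoxHRel F q (bhcinv F i * bhc F i) 1
  | central_c (i : ZMod 4) (a : FreeAlgebra F BHGen) : BoxHRel F q (bhc F i * a) (a * bhc F i)
  | central_cinv (i : ZMod 4) (a : FreeAlgebra F BHGen) :
      BoxHRel F q (bhcinv F i * a) (a * bhcinv F i)
  | weyl (i : ZMod 4) : BoxHRel F q
      ((q - q⁻¹)⁻¹ • (q • (bhx F i * bhx F (i + 1)) - q⁻¹ • (bhx F (i + 1) * bhx F i)))
      (bhc F i)
  | serre (i : ZMod 4) : BoxHRel F q (qSerre q (bhx F i) (bhx F (i + 2))) 0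

/-- The algebra `□̂_q`. -/
abbrev BoxH (F : Type*) [Field F] (q : F) := RingQuot (BoxHRel F q)

/-- The generators `x_i` of `□̂_q`. -/
def xH (F : Type*) [Field F] (q : F) (i : ZMod 4) : BoxH F q :=
  RingQuot.mkAlgHom F (BoxHRel F q) (bhx F i)

/-- The central generators `c_i` of `□̂_q`. -/
def cH (F : Type*) [Field F] (q : F) (i : ZMod 4) : BoxH F q :=
  RingQuot.mkAlgHom F (BoxHRel F q) (bhc F i)

/-- The central generators `c_i⁻¹` of `□̂_q`. -/
def cinvH (F : Type*) [Field F] (q : F) (i : ZMod 4) : BoxH F q :=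
  RingQuot.mkAlgHom F (BoxHRel F q) (bhcinv F i)

lemma sub_inv_ne_zero_of_sq_ne_one {F : Type*} [Field F] {q : F} (hq : q ≠ 0) (hq2 : q ^ 2 ≠ 1) :
    q - q⁻¹ ≠ 0 := by
  intro h
  apply hq2
  field_simp at h
  simpa [sub_eq_zero] using h

/-- The first `q`-Dolan/Grady relation for `X + Y` and `Z + W`. The second one is an instance of
this lemma too: the shift `(X, Y, Z, W, d, e) ↦ (Z, W, X, Y, e, d)` interchanges `hYZ` and `hWX`,
and turns `hXY`, `hXZ`, `hYW` into the `q`-commutator relation for `(Z, W)` and the `q`-Serre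
relations for `(Z, X)` and `(W, Y)`. -/
lemma dolanGrady_of_qWeyl {F R : Type*} [Field F] [Ring R] [Algebra F R] (q : F) (hq : q ≠ 0)
    (hq2 : q ^ 2 ≠ 1) (X Y Z W d e : R)
    (hd : ∀ a, a * d = d * a) (he : ∀ a, a * e = e * a)
    (hXY : q • (X * Y) - q⁻¹ • (Y * X) = (q - q⁻¹) • (1 : R))
    (hYZ : q • (Y * Z) - q⁻¹ • (Z * Y) = (q - q⁻¹) • d)
    (hWX : q • (W * X) - q⁻¹ • (X * W) = (q - q⁻¹) • e)
    (hXZ : qSerre q X Z = 0) (hYW : qSerre q Y W = 0) :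
    qSerre q (X + Y) (Z + W) =
      ((q ^ 2 - q⁻¹ ^ 2) ^ 2) • ((Z + W) * (X + Y) - (X + Y) * (Z + W)) := by
  have h3 : (q ^ 3 - q⁻¹ ^ 3) / (q - q⁻¹) = q ^ 2 + 1 + q⁻¹ ^ 2 := by
    rw [div_eq_iff (sub_inv_ne_zero_of_sq_ne_one hq hq2)]
    field_simp
    ring
  simp only [qSerre, h3] at hXZ hYW ⊢
  -- Each relation becomes a rewriting rule; the normal forms are the words
  -- `Yᵃ · w(X, Z)` and `w(Y, W) · Xᵃ`, times powers of `d` and `e`, with `X³Z` and `Y³W` eliminated.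
  have r1 : X * Y = q⁻¹ ^ 2 • (Y * X) + (1 - q⁻¹ ^ 2) • (1 : R) := by
    have := congrArg (q⁻¹ • ·) hXY
    simp only [smul_sub, smul_smul, inv_mul_cancel₀ hq, one_smul] at this
    rw [sub_eq_iff_eq_add.1 this]
    match_scalars <;> field_simp
  have r2 : Z * Y = q ^ 2 • (Y * Z) + (1 - q ^ 2) • d := by
    have h : Z * Y = q • (q • (Y * Z) - (q - q⁻¹) • d) := by
      rw [← hYZ, sub_sub_cancel, smul_smul, mul_inv_cancel₀ hq, one_smul]
    rw [h]
    match_scalars <;> field_simp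
    ring
  have r3 : X * W = q ^ 2 • (W * X) + (1 - q ^ 2) • e := by
    have h : X * W = q • (q • (W * X) - (q - q⁻¹) • e) := by
      rw [← hWX, sub_sub_cancel, smul_smul, mul_inv_cancel₀ hq, one_smul]
    rw [h]
    match_scalars <;> field_simp
    ring
  have r4 : X * (X * (X * Z)) = (q ^ 2 + 1 + q⁻¹ ^ 2) • (X * (X * (Z * X)))
      - (q ^ 2 + 1 + q⁻¹ ^ 2) • (X * (Z * (X * X))) + Z * (X * (X * X)) := by
    rw [← sub_eq_zero, ← hXZ]
    simp only [pow_succ, pow_zero, one_mul, mul_assoc]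
    abel
  have r5 : Y * (Y * (Y * W)) = (q ^ 2 + 1 + q⁻¹ ^ 2) • (Y * (Y * (W * Y)))
      - (q ^ 2 + 1 + q⁻¹ ^ 2) • (Y * (W * (Y * Y))) + W * (Y * (Y * Y)) := by
    rw [← sub_eq_zero, ← hYW]
    simp only [pow_succ, pow_zero, one_mul, mul_assoc]
    abel
  have assoc_rule {a b c : R} (h : a * b = c) (t : R) : a * (b * t) = c * t := by
    rw [← mul_assoc, h]
  simp only [pow_three, pow_two (X + Y)]
  simp only [mul_add, add_mul, smul_add, smul_sub, mul_assoc,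
    mul_smul_comm, smul_mul_assoc, one_mul, mul_one, r1, assoc_rule r1, r2, assoc_rule r2,
    r3, assoc_rule r3, r4, r5, hd X, hd Y, he X, he Y,
    assoc_rule (hd X), assoc_rule (hd Y), assoc_rule (he X), assoc_rule (he Y)]
  match_scalars <;> field_simp <;> ring

/-- Rescaling both arguments by central elements rescales the `q`-Serre expression, so it
preserves the `q`-Serre relation. -/
lemma qSerre_central_mul {F R : Type*} [Field F] [Ring R] [Algebra F R] (q : F) {a b u v : R}
    (ha : ∀ t, t * a = a * t) (hb : ∀ t, t * b = b * t) (h : qSerre q u v = 0) :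
    qSerre q (a * u) (b * v) = 0 := by
  have key : qSerre q (a * u) (b * v) = a ^ 3 * b * qSerre q u v := by
    have ha' (t s : R) : t * (a * s) = a * (t * s) := by rw [← mul_assoc, ha, mul_assoc]
    have hb' (t s : R) : t * (b * s) = b * (t * s) := by rw [← mul_assoc, hb, mul_assoc]
    simp only [qSerre, mul_sub, mul_add, mul_smul_comm, pow_succ, pow_zero, one_mul, mul_assoc,
      ha' u, ha' v, ha' b, hb' u]
  rw [key, h, mul_zero]

/-- A `q`-commutator of central multiples, in terms of the `q`-commutator of the factors. -/
lemma qComm_central_mul {F R : Type*} [Field F] [Ring R] [Algebra F R] (q : F) {a b u v c : R}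
    (ha : ∀ t, t * a = a * t) (hb : ∀ t, t * b = b * t)
    (h : q • (u * v) - q⁻¹ • (v * u) = (q - q⁻¹) • c) :
    q • (a * u * (b * v)) - q⁻¹ • (b * v * (a * u)) = (q - q⁻¹) • (a * b * c) := by
  rw [← mul_smul_comm (q - q⁻¹), ← h]
  have ha' (t s : R) : t * (a * s) = a * (t * s) := by rw [← mul_assoc, ha, mul_assoc]
  have hb' (t s : R) : t * (b * s) = b * (t * s) := by rw [← mul_assoc, hb, mul_assoc]
  simp only [mul_sub, mul_smul_comm, mul_assoc, ha' v, ha' b, hb' u]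

section BoxH

variable {F : Type*} [Field F] {q : F}

lemma mul_cH (i : ZMod 4) (a : BoxH F q) : a * cH F q i = cH F q i * a := by
  obtain ⟨b, rfl⟩ := RingQuot.mkAlgHom_surjective F (BoxHRel F q) a
  simpa only [cH, map_mul] using (RingQuot.mkAlgHom_rel F (BoxHRel.central_c (q := q) i b)).symm

lemma mul_cinvH (i : ZMod 4) (a : BoxH F q) : a * cinvH F q i = cinvH F q i * a := by
  obtain ⟨b, rfl⟩ := RingQuot.mkAlgHom_surjective F (BoxHRel F q) a
  simpa only [cinvH, map_mul] using (RingQuot.mkAlgHom_rel F (BoxHRel.central_cinv (q := q) i b)).symm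

lemma mul_comm_of_mem_adjoin {a : BoxH F q}
    (ha : a ∈ Algebra.adjoin F (Set.range (cH F q) ∪ Set.range (cinvH F q))) (t : BoxH F q) :
    t * a = a * t := by
  have hle : Algebra.adjoin F (Set.range (cH F q) ∪ Set.range (cinvH F q)) ≤
      Subalgebra.center F (BoxH F q) := by
    apply Algebra.adjoin_le
    rintro _ (⟨i, rfl⟩ | ⟨i, rfl⟩)
    · exact Subalgebra.mem_center_iff.2 (mul_cH i)
    · exact Subalgebra.mem_center_iff.2 (mul_cinvH i)
  exact Subalgebra.mem_center_iff.1 (hle ha) t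

lemma xH_weyl (hq : q ≠ 0) (hq2 : q ^ 2 ≠ 1) (i : ZMod 4) :
    q • (xH F q i * xH F q (i + 1)) - q⁻¹ • (xH F q (i + 1) * xH F q i) =
      (q - q⁻¹) • cH F q i := by
  have h := RingQuot.mkAlgHom_rel F (BoxHRel.weyl (q := q) i)
  simp only [map_smul, map_sub, map_mul] at h
  exact (inv_smul_eq_iff₀ (sub_inv_ne_zero_of_sq_ne_one hq hq2)).1 h

lemma xH_serre (i : ZMod 4) : qSerre q (xH F q i) (xH F q (i + 2)) = 0 := by
  have h := RingQuot.mkAlgHom_rel F (BoxHRel.serre (q := q) i)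
  simpa only [qSerre, xH, map_smul, map_sub, map_add, map_mul, map_pow, map_zero] using h

end BoxH

/-- Proposition 9.22: for elements `αᵢ` of `Ĉ` with `α₀α₁c₀ = 1` and `α₂α₃c₂ = 1`, there is
an algebra homomorphism `♮ : O_q → □̂_q` sending `A ↦ α₀x₀ + α₁x₁`, `B ↦ α₂x₂ + α₃x₃`. -/
theorem stmt12 (F : Type*) [Field F] (q : F) (hq : q ≠ 0) (hq2 : q ^ 2 ≠ 1)
    (α0 α1 α2 α3 : BoxH F q)
    (h0 : α0 ∈ Algebra.adjoin F (Set.range (cH F q) ∪ Set.range (cinvH F q)))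
    (h1 : α1 ∈ Algebra.adjoin F (Set.range (cH F q) ∪ Set.range (cinvH F q)))
    (h2 : α2 ∈ Algebra.adjoin F (Set.range (cH F q) ∪ Set.range (cinvH F q)))
    (h3 : α3 ∈ Algebra.adjoin F (Set.range (cH F q) ∪ Set.range (cinvH F q)))
    (hc0 : α0 * α1 * cH F q 0 = 1) (hc2 : α2 * α3 * cH F q 2 = 1) :
    ∃ f : Onsager F q →ₐ[F] BoxH F q,
      f (Ag F q) = α0 * xH F q 0 + α1 * xH F q 1 ∧
      f (Bg F q) = α2 * xH F q 2 + α3 * xH F q 3 := by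
  have z0 := mul_comm_of_mem_adjoin h0
  have z1 := mul_comm_of_mem_adjoin h1
  have z2 := mul_comm_of_mem_adjoin h2
  have z3 := mul_comm_of_mem_adjoin h3
  have central_mul {a b c : BoxH F q} (ha : ∀ t, t * a = a * t) (hb : ∀ t, t * b = b * t)
      (hc : ∀ t, t * c = c * t) (t : BoxH F q) : t * (a * b * c) = a * b * c * t := by
    rw [← mul_assoc, ← mul_assoc, ha, mul_assoc a, hb, mul_assoc, mul_assoc, mul_assoc, hc]
    simp only [mul_assoc]
  have w01 := qComm_central_mul q z0 z1 (xH_weyl hq hq2 0)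
  have w12 := qComm_central_mul q z1 z2 (xH_weyl hq hq2 1)
  have w23 := qComm_central_mul q z2 z3 (xH_weyl hq hq2 2)
  have w30 := qComm_central_mul q z3 z0 (xH_weyl hq hq2 3)
  rw [hc0] at w01
  rw [hc2] at w23
  have hd := central_mul z1 z2 (mul_cH 1)
  have he := central_mul z3 z0 (mul_cH 3)
  have s02 := qSerre_central_mul q z0 z2 (xH_serre 0)
  have s13 := qSerre_central_mul q z1 z3 (xH_serre 1)
  have s20 := qSerre_central_mul q z2 z0 (xH_serre 2)
  have s31 := qSerre_central_mul q z3 z1 (xH_serre 3)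
  have dg1 := dolanGrady_of_qWeyl q hq hq2 _ _ _ _ _ _ hd he w01 w12 w30 s02 s13
  have dg2 := dolanGrady_of_qWeyl q hq hq2 _ _ _ _ _ _ he hd w23 w30 w12 s20 s31
  let g : FreeAlgebra F (Fin 2) →ₐ[F] BoxH F q := FreeAlgebra.lift F
    ![α0 * xH F q 0 + α1 * xH F q 1, α2 * xH F q 2 + α3 * xH F q 3]
  have g0 : g (FreeAlgebra.ι F 0) = α0 * xH F q 0 + α1 * xH F q 1 := by simp [g]
  have g1 : g (FreeAlgebra.ι F 1) = α2 * xH F q 2 + α3 * xH F q 3 := by simp [g]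
  have hg : ∀ ⦃x y⦄, OnsagerRel F q x y → g x = g y := by
    rintro _ _ (_ | _)
    · simp only [qSerre, map_smul, map_sub, map_add, map_mul, map_pow, g0, g1]
      exact dg1
    · simp only [qSerre, map_smul, map_sub, map_add, map_mul, map_pow, g0, g1]
      exact dg2
  refine ⟨RingQuot.liftAlgHom F ⟨g, hg⟩, ?_, ?_⟩
  · rw [Ag, RingQuot.liftAlgHom_mkAlgHom_apply, g0]
  · rw [Bg, RingQuot.liftAlgHom_mkAlgHom_apply, g1]
end
end

section
/- Let Ĉ denote the subalgebra of □̂_q generated by the c_i^{±1} (i ∈ ℤ/4ℤ), and let α₀, α₁, α₂, α₃ be elements of Ĉ such that α₀ α₁ c₀ = 1 and α₂ α₃ c₂ = 1. Then the F-algebra homomorphism ♮ : O_q → □̂_q that sends A ↦ α₀ x₀ + α₁ x₁ and B ↦ α₂ x₂ + α₃ x₃ is injective. -/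
/-!
Injectivity is detected by a single representation of `□̂_q`, in which `A` and `B` act as
multiplication operators plus terms of lower degree.

Let `S` be the free algebra on two letters `X`, `Y` and let `U` be its quotient by the ideal
generated by the two `q`-Serre expressions. On `S` let `x₀`, `x₂` act as left multiplication by
`X`, `Y`, and let `x₁`, `x₃` act as the skew derivations `D` with `D 1 = 0` and
`D (X v) = q^{±2} X (D v) + (1 - q^{±2}) v`, `D (Y v) = q^{∓2} Y (D v) + (1 - q^{∓2}) v` (upper
signs for `x₁`, lower signs for `x₃`). These formulas are the relations between consecutive `x_i`
with `c_i = 1`. The identity `[3]_q = q² + 1 + q⁻²` makes all correction terms cancel when a skew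
derivation is moved across a `q`-Serre expression in `X`, `Y` (`skew_mul_qSerre`), so that the
operators descend to `U`. It likewise lets a letter be moved across a `q`-Serre expression in the
two skew derivations (`qSerre_mul_skew`), so that these satisfy the `q`-Serre relations. This gives
the representation `rep` of `□̂_q` on `U`. The elements of `Ĉ` act as scalars, and since `α₀`, `α₂`
are invertible, `A` and `B` act as `a₀ X + a₁ D₁` and `a₂ Y + a₃ D₃` with `a₀, a₂ ≠ 0`.

Multiplication by a letter raises the degree by one and `D` lowers it by one. So for a
noncommutative polynomial `p` of degree at most `n`, the degree `n` component of `p(A, B) 1` is that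
of `p`, up to rescaling the letters (`sub_comp_opAB_mem`). If `p(A, B)` goes to zero in `□̂_q`, then
`p(A, B) 1` lies in the `q`-Serre ideal, which is homogeneous and stable under rescaling. Modulo the
`q`-Dolan/Grady relations, `q`-Serre expressions can be rewritten in lower degree
(`comp_serreIdeal`). Hence `p` agrees in `O_q` with a polynomial of degree less than `n`, and
induction on `n` shows that `p` vanishes in `O_q`.
-/

noncomputable section

/-! ### The `q`-Serre expression and skew commutation -/

lemma qthree_eq {F : Type*} [Field F] {q : F} (hq : q ≠ 0) (hq2 : q ^ 2 ≠ 1) :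
    (q ^ 3 - q⁻¹ ^ 3) / (q - q⁻¹) = q ^ 2 + 1 + (q ^ 2)⁻¹ := by
  have h : q ^ 2 - 1 ≠ 0 := sub_ne_zero.mpr hq2
  have h1 : q - q⁻¹ ≠ 0 := by
    intro h0
    apply h
    have h2 := congrArg (q * ·) h0
    simpa [mul_sub, hq, pow_two] using h2
  rw [div_eq_iff h1]
  field_simp
  ring

/-- If `d` skew-commutes with `u` and `w` with mutually inverse parameters `k^{±1} = q^{±2}`, then
all correction terms cancel when `d` is moved across the `q`-Serre expression from the left. -/
lemma skew_mul_qSerre {F : Type*} [Field F] {q : F} (hq : q ≠ 0) (hq2 : q ^ 2 ≠ 1)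
    {R : Type*} [Ring R] [Algebra F R] {k m : F} (hkm : k * m = 1)
    (hk : q ^ 2 + 1 + (q ^ 2)⁻¹ = k + 1 + m) (d u w : R)
    (hu : d * u = k • (u * d) + (1 - k) • 1) (hw : d * w = m • (w * d) + (1 - m) • 1) :
    d * qSerre q u w = k ^ 2 • (qSerre q u w * d) := by
  have hu' (z : R) : d * (u * z) = k • (u * (d * z)) + (1 - k) • z := by
    rw [← mul_assoc, hu]; simp [add_mul, mul_assoc]
  have hw' (z : R) : d * (w * z) = m • (w * (d * z)) + (1 - m) • z := by
    rw [← mul_assoc, hw]; simp [add_mul, mul_assoc]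
  rw [qSerre, qthree_eq hq hq2, hk]
  clear hk
  simp only [pow_succ, pow_zero, one_mul, mul_assoc, mul_add, add_mul,
    mul_sub, sub_mul, smul_mul_assoc, mul_smul_comm, hu, hw, hu', hw', smul_add, smul_sub, mul_one]
  clear hu hw hu' hw'
  match_scalars <;> grind

/-- The mirror image of `skew_mul_qSerre`: moving the `q`-Serre expression in `u`, `w` across an
element `z`. -/
lemma qSerre_mul_skew {F : Type*} [Field F] {q : F} (hq : q ≠ 0) (hq2 : q ^ 2 ≠ 1)
    {R : Type*} [Ring R] [Algebra F R] {k m : F} (hkm : k * m = 1)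
    (hk : q ^ 2 + 1 + (q ^ 2)⁻¹ = k + 1 + m) (z u w : R)
    (hu : u * z = k • (z * u) + (1 - k) • 1) (hw : w * z = m • (z * w) + (1 - m) • 1) :
    qSerre q u w * z = k ^ 2 • (z * qSerre q u w) := by
  have hu' (y : R) : u * (z * y) = k • (z * (u * y)) + (1 - k) • y := by
    rw [← mul_assoc, hu]; simp [add_mul, mul_assoc]
  have hw' (y : R) : w * (z * y) = m • (z * (w * y)) + (1 - m) • y := by
    rw [← mul_assoc, hw]; simp [add_mul, mul_assoc]
  rw [qSerre, qthree_eq hq hq2, hk]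
  clear hk
  simp only [pow_succ, pow_zero, one_mul, mul_assoc, mul_add, add_mul,
    mul_sub, sub_mul, smul_mul_assoc, mul_smul_comm, hu, hw, hu', hw', smul_add, smul_sub, mul_one]
  clear hu hw hu' hw'
  match_scalars <;> grind

/-! ### Words and the degree filtration of the free algebra -/

/-- The noncommutative monomial spelled by a list of letters. -/
def word (F : Type*) [Field F] (l : List (Fin 2)) : FreeAlgebra F (Fin 2) :=
  (l.map (FreeAlgebra.ι F)).prod

@[simp] lemma word_nil (F : Type*) [Field F] : word F [] = 1 := by simp [word]

@[simp] lemma word_cons (F : Type*) [Field F] (i : Fin 2) (l : List (Fin 2)) :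
    word F (i :: l) = FreeAlgebra.ι F i * word F l := by simp [word]

@[simp] lemma word_append (F : Type*) [Field F] (l l' : List (Fin 2)) :
    word F (l ++ l') = word F l * word F l' := by simp [word]

lemma span_word (F : Type*) [Field F] : Submodule.span F (Set.range (word F)) = ⊤ := by
  rw [eq_top_iff]
  have key (p : FreeAlgebra F (Fin 2)) : ∀ v ∈ Submodule.span F (Set.range (word F)),
      p * v ∈ Submodule.span F (Set.range (word F)) := by
    induction p using FreeAlgebra.induction with
    | grade0 r =>
      intro v hv
      rw [← Algebra.smul_def]
      exact Submodule.smul_mem _ _ hv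
    | grade1 i =>
      intro v hv
      induction hv using Submodule.span_induction with
      | mem x hx =>
        obtain ⟨l, rfl⟩ := hx
        exact Submodule.subset_span ⟨i :: l, by simp⟩
      | zero => simp
      | add x y _ _ hx hy => rw [mul_add]; exact add_mem hx hy
      | smul r x _ hx => rw [mul_smul_comm]; exact Submodule.smul_mem _ _ hx
    | mul a b ha hb => intro v hv; rw [mul_assoc]; exact ha _ (hb _ hv)
    | add a b ha hb => intro v hv; rw [add_mul]; exact add_mem (ha _ hv) (hb _ hv)
  intro p _
  simpa using key p 1 (Submodule.subset_span ⟨[], by simp⟩)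

/-- The elements of the free algebra of degree `< n`. The strict inequality makes `Flt F 0`
the zero subspace. -/
def Flt (F : Type*) [Field F] (n : ℕ) : Submodule F (FreeAlgebra F (Fin 2)) :=
  Submodule.span F (word F '' {l | l.length < n})

lemma word_mem_Flt {F : Type*} [Field F] {l : List (Fin 2)} {n : ℕ} (h : l.length < n) :
    word F l ∈ Flt F n := Submodule.subset_span ⟨l, h, rfl⟩

lemma Flt_mono {F : Type*} [Field F] {m n : ℕ} (h : m ≤ n) : Flt F m ≤ Flt F n :=
  Submodule.span_mono (Set.image_mono fun _ hl => lt_of_lt_of_le hl h)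

/-- A linear condition holds on `Flt F n` as soon as it holds on words. -/
lemma Flt_le {F : Type*} [Field F] {n : ℕ} {N : Submodule F (FreeAlgebra F (Fin 2))}
    (h : ∀ l : List (Fin 2), l.length < n → word F l ∈ N) : Flt F n ≤ N := by
  rw [Flt, Submodule.span_le]
  rintro _ ⟨l, hl, rfl⟩
  exact h l hl

lemma exists_mem_Flt {F : Type*} [Field F] (p : FreeAlgebra F (Fin 2)) : ∃ n, p ∈ Flt F n := by
  have hp : p ∈ Submodule.span F (Set.range (word F)) := by rw [span_word]; trivial
  induction hp using Submodule.span_induction with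
  | mem x hx =>
    obtain ⟨l, rfl⟩ := hx
    exact ⟨_, word_mem_Flt (Nat.lt_succ_self _)⟩
  | zero => exact ⟨0, zero_mem _⟩
  | add x y _ _ hx hy =>
    obtain ⟨m, hm⟩ := hx
    obtain ⟨n, hn⟩ := hy
    exact ⟨max m n, add_mem (Flt_mono (le_max_left _ _) hm) (Flt_mono (le_max_right _ _) hn)⟩
  | smul r x _ hx =>
    obtain ⟨m, hm⟩ := hx
    exact ⟨m, Submodule.smul_mem _ _ hm⟩

lemma ι_mul_mem_Flt {F : Type*} [Field F] {n : ℕ} (i : Fin 2) {v : FreeAlgebra F (Fin 2)}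
    (hv : v ∈ Flt F n) : FreeAlgebra.ι F i * v ∈ Flt F (n + 1) := by
  have : Flt F n ≤ (Flt F (n + 1)).comap (LinearMap.mulLeft F (FreeAlgebra.ι F i)) := by
    refine Flt_le fun l hl => ?_
    have h : word F (i :: l) ∈ Flt F (n + 1) := word_mem_Flt (by simpa using hl)
    simpa using h
  simpa using this hv

/-! ### Skew derivations lowering the degree -/

/-- The algebra homomorphism into `2 × 2` matrices whose upper right entry is the skew derivation
`skewD`: it sends the generator `i` to the matrix with rows `(κ i • i, 1 - κ i)` and `(0, i)`. -/
def skewHom {F : Type*} [Field F] (κ : Fin 2 → F) :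
    FreeAlgebra F (Fin 2) →ₐ[F] Matrix (Fin 2) (Fin 2) (FreeAlgebra F (Fin 2)) :=
  FreeAlgebra.lift F fun i =>
    !![κ i • FreeAlgebra.ι F i, algebraMap F _ (1 - κ i); 0, FreeAlgebra.ι F i]

/-- The linear operator `D` on the free algebra with `D 1 = 0` and
`D (i v) = κ i • i (D v) + (1 - κ i) • v` for each generator `i`. -/
def skewD {F : Type*} [Field F] (κ : Fin 2 → F) : Module.End F (FreeAlgebra F (Fin 2)) where
  toFun v := skewHom κ v 0 1
  map_add' := by simp
  map_smul' := by simp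

lemma skewHom_one_one {F : Type*} [Field F] (κ : Fin 2 → F) (v : FreeAlgebra F (Fin 2)) :
    skewHom κ v 1 0 = 0 ∧ skewHom κ v 1 1 = v := by
  induction v using FreeAlgebra.induction with
  | grade0 r => simp [Matrix.algebraMap_matrix_apply]
  | grade1 i => simp [skewHom]
  | mul a b ha hb => simp [Matrix.mul_apply, ha, hb]
  | add a b ha hb => simp [ha, hb]

@[simp] lemma skewD_one {F : Type*} [Field F] (κ : Fin 2 → F) : skewD κ 1 = 0 := by
  simp [skewD]

lemma skewD_ι_mul {F : Type*} [Field F] (κ : Fin 2 → F) (i : Fin 2) (v : FreeAlgebra F (Fin 2)) :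
    skewD κ (FreeAlgebra.ι F i * v) = κ i • (FreeAlgebra.ι F i * skewD κ v) + (1 - κ i) • v := by
  change skewHom κ _ 0 1 = κ i • (_ * skewHom κ v 0 1) + _
  rw [map_mul, Matrix.mul_apply, Fin.sum_univ_two, (skewHom_one_one κ v).2]
  simp [skewHom, Algebra.smul_def, sub_mul, mul_assoc]

/-- `skewD_ι_mul` as an identity of operators. -/
lemma skewD_mul_mulLeft {F : Type*} [Field F] (κ : Fin 2 → F) (i : Fin 2) :
    skewD κ * LinearMap.mulLeft F (FreeAlgebra.ι F i) =
      κ i • (LinearMap.mulLeft F (FreeAlgebra.ι F i) * skewD κ) + (1 - κ i) • 1 := by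
  ext v
  simp [skewD_ι_mul]

lemma skewD_mem_Flt {F : Type*} [Field F] (κ : Fin 2 → F) {n : ℕ} {v : FreeAlgebra F (Fin 2)}
    (hv : v ∈ Flt F (n + 1)) : skewD κ v ∈ Flt F n := by
  have key (l : List (Fin 2)) : skewD κ (word F l) ∈ Flt F l.length := by
    induction l with
    | nil => simp
    | cons i l ih =>
      rw [word_cons, skewD_ι_mul, List.length_cons]
      exact add_mem (Submodule.smul_mem _ _ (ι_mul_mem_Flt i ih))
        (Submodule.smul_mem _ _ (word_mem_Flt (Nat.lt_succ_self _)))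
  have : Flt F (n + 1) ≤ (Flt F n).comap (skewD κ) :=
    Flt_le fun l hl => Flt_mono (Nat.lt_succ_iff.mp hl) (key l)
  exact this hv

/-! ### The `q`-Serre ideal and the operators on the quotient -/

/-- The two-sided ideal generated by both `q`-Serre expressions, as the linear span of the products
word · expression · word. The expression number `j` has the letter `j` cubed. -/
def serreIdeal {F : Type*} [Field F] (q : F) : Submodule F (FreeAlgebra F (Fin 2)) :=
  Submodule.span F (Set.range fun x : List (Fin 2) × Fin 2 × List (Fin 2) =>
    word F x.1 * qSerre q (FreeAlgebra.ι F x.2.1) (FreeAlgebra.ι F (x.2.1 + 1)) * word F x.2.2)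

lemma word_mul_mem_serreIdeal {F : Type*} [Field F] (q : F) (l : List (Fin 2)) (j : Fin 2)
    (v : FreeAlgebra F (Fin 2)) :
    word F l * qSerre q (FreeAlgebra.ι F j) (FreeAlgebra.ι F (j + 1)) * v ∈ serreIdeal q := by
  have hv : v ∈ Submodule.span F (Set.range (word F)) := by rw [span_word]; trivial
  induction hv using Submodule.span_induction with
  | mem x hx =>
    obtain ⟨l', rfl⟩ := hx
    exact Submodule.subset_span ⟨(l, j, l'), rfl⟩
  | zero => simp
  | add x y _ _ hx hy => rw [mul_add]; exact add_mem hx hy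
  | smul r x _ hx => rw [mul_smul_comm]; exact Submodule.smul_mem _ _ hx

lemma mulLeft_serreIdeal {F : Type*} [Field F] (q : F) (i : Fin 2) :
    serreIdeal q ≤ (serreIdeal q).comap (LinearMap.mulLeft F (FreeAlgebra.ι F i)) := by
  rw [serreIdeal, Submodule.span_le]
  rintro _ ⟨⟨l, j, l'⟩, rfl⟩
  exact Submodule.subset_span ⟨(i :: l, j, l'), by simp [mul_assoc]⟩

lemma qSerre_mulLeft {F : Type*} [Field F] (q : F) (u w v : FreeAlgebra F (Fin 2)) :
    qSerre q (LinearMap.mulLeft F u) (LinearMap.mulLeft F w) v = qSerre q u w * v := by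
  simp [qSerre, pow_succ, Module.End.mul_apply, mul_assoc, sub_mul, add_mul]

/-- The parameters `κ` for which `skewD κ` is compatible with the `q`-Serre relations: the two
entries are mutually inverse and equal to `q^{±2}`. -/
def SkewParam {F : Type*} [Field F] (q : F) (κ : Fin 2 → F) : Prop :=
  ∀ j, κ j * κ (j + 1) = 1 ∧ q ^ 2 + 1 + (q ^ 2)⁻¹ = κ j + 1 + κ (j + 1)

lemma skewD_serreIdeal {F : Type*} [Field F] {q : F} (hq : q ≠ 0) (hq2 : q ^ 2 ≠ 1)
    {κ : Fin 2 → F} (hκ : SkewParam q κ) :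
    serreIdeal q ≤ (serreIdeal q).comap (skewD κ) := by
  nth_rewrite 1 [serreIdeal]
  rw [Submodule.span_le]
  rintro _ ⟨⟨l, j, l'⟩, rfl⟩
  change skewD κ (word F l * _ * word F l') ∈ serreIdeal q
  induction l with
  | nil =>
    have h := skew_mul_qSerre hq hq2 (hκ j).1 (hκ j).2 _ _ _
      (skewD_mul_mulLeft κ j) (skewD_mul_mulLeft κ (j + 1))
    have h' := congrArg (fun T => T (word F l')) h
    simp only [Module.End.mul_apply, LinearMap.smul_apply, qSerre_mulLeft] at h'
    rw [word_nil, one_mul, h']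
    simpa using Submodule.smul_mem _ (κ j ^ 2) (word_mul_mem_serreIdeal q [] j _)
  | cons i l ih =>
    rw [word_cons, mul_assoc, mul_assoc, skewD_ι_mul, ← mul_assoc (word F l)]
    exact add_mem (Submodule.smul_mem _ _ (mulLeft_serreIdeal q i ih))
      (Submodule.smul_mem _ _ (word_mul_mem_serreIdeal q l j _))

/-- The skew derivations satisfy the `q`-Serre relations already on the free algebra: by
`qSerre_mul_skew` the `q`-Serre operator commutes with the letters up to scalars, and it kills
`1`. -/
lemma qSerre_skewD {F : Type*} [Field F] {q : F} (hq : q ≠ 0) (hq2 : q ^ 2 ≠ 1)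
    {κ κ' : Fin 2 → F} (h : ∀ i, κ i * κ' i = 1 ∧ q ^ 2 + 1 + (q ^ 2)⁻¹ = κ i + 1 + κ' i) :
    qSerre q (skewD κ) (skewD κ') = 0 := by
  have hw (l : List (Fin 2)) : qSerre q (skewD κ) (skewD κ') (word F l) = 0 := by
    induction l with
    | nil => simp [qSerre, pow_succ, Module.End.mul_apply]
    | cons i l ih =>
      have h1 := qSerre_mul_skew hq hq2 (h i).1 (h i).2 _ _ _
        (skewD_mul_mulLeft κ i) (skewD_mul_mulLeft κ' i)
      have h2 := congrArg (fun T => T (word F l)) h1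
      simpa [Module.End.mul_apply, ih] using h2
  refine LinearMap.ext_on (span_word F) ?_
  rintro _ ⟨l, rfl⟩
  simpa using hw l

/-- The operators on the free algebra representing `x₀, x₁, x₂, x₃`. -/
def opS {F : Type*} [Field F] (q : F) : Fin 4 → Module.End F (FreeAlgebra F (Fin 2)) :=
  ![LinearMap.mulLeft F (FreeAlgebra.ι F 0), skewD ![q ^ 2, (q ^ 2)⁻¹],
    LinearMap.mulLeft F (FreeAlgebra.ι F 1), skewD ![(q ^ 2)⁻¹, q ^ 2]]

lemma opS_serreIdeal {F : Type*} [Field F] {q : F} (hq : q ≠ 0) (hq2 : q ^ 2 ≠ 1) (i : Fin 4) :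
    serreIdeal q ≤ (serreIdeal q).comap (opS q i) := by
  have hk : q ^ 2 ≠ 0 := pow_ne_zero _ hq
  fin_cases i
  · exact mulLeft_serreIdeal q 0
  · refine skewD_serreIdeal hq hq2 fun j => ?_
    fin_cases j <;> (simp [hk]; try ring)
  · exact mulLeft_serreIdeal q 1
  · refine skewD_serreIdeal hq hq2 fun j => ?_
    fin_cases j <;> (simp [hk]; try ring)

/-- The operators induced by `opS` on the quotient by the `q`-Serre ideal. -/
def opV {F : Type*} [Field F] {q : F} (hq : q ≠ 0) (hq2 : q ^ 2 ≠ 1) (i : Fin 4) :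
    Module.End F (FreeAlgebra F (Fin 2) ⧸ serreIdeal q) :=
  (serreIdeal q).mapQ (serreIdeal q) (opS q i) (opS_serreIdeal hq hq2 i)

@[simp] lemma opV_mk {F : Type*} [Field F] {q : F} (hq : q ≠ 0) (hq2 : q ^ 2 ≠ 1) (i : Fin 4)
    (v : FreeAlgebra F (Fin 2)) :
    opV hq hq2 i (Submodule.Quotient.mk v) = Submodule.Quotient.mk (opS q i v) := rfl

lemma opS_weyl {F : Type*} [Field F] {q : F} (hq : q ≠ 0) (i : Fin 4) :
    q • (opS q i * opS q (i + 1)) - q⁻¹ • (opS q (i + 1) * opS q i) = (q - q⁻¹) • 1 := by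
  fin_cases i
  · change q • (LinearMap.mulLeft F (FreeAlgebra.ι F 0) * skewD ![q ^ 2, (q ^ 2)⁻¹])
      - q⁻¹ • (skewD ![q ^ 2, (q ^ 2)⁻¹] * LinearMap.mulLeft F (FreeAlgebra.ι F 0)) = _
    rw [skewD_mul_mulLeft]
    match_scalars <;> (simp; field_simp; try ring)
  · change q • (skewD ![q ^ 2, (q ^ 2)⁻¹] * LinearMap.mulLeft F (FreeAlgebra.ι F 1))
      - q⁻¹ • (LinearMap.mulLeft F (FreeAlgebra.ι F 1) * skewD ![q ^ 2, (q ^ 2)⁻¹]) = _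
    rw [skewD_mul_mulLeft]
    match_scalars <;> (simp; field_simp; try ring)
  · change q • (LinearMap.mulLeft F (FreeAlgebra.ι F 1) * skewD ![(q ^ 2)⁻¹, q ^ 2])
      - q⁻¹ • (skewD ![(q ^ 2)⁻¹, q ^ 2] * LinearMap.mulLeft F (FreeAlgebra.ι F 1)) = _
    rw [skewD_mul_mulLeft]
    match_scalars <;> (simp; field_simp; try ring)
  · change q • (skewD ![(q ^ 2)⁻¹, q ^ 2] * LinearMap.mulLeft F (FreeAlgebra.ι F 0))
      - q⁻¹ • (LinearMap.mulLeft F (FreeAlgebra.ι F 0) * skewD ![(q ^ 2)⁻¹, q ^ 2]) = _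
    rw [skewD_mul_mulLeft]
    match_scalars <;> (simp; field_simp; try ring)

lemma opS_serre {F : Type*} [Field F] {q : F} (hq : q ≠ 0) (hq2 : q ^ 2 ≠ 1) (i : Fin 4)
    (v : FreeAlgebra F (Fin 2)) : qSerre q (opS q i) (opS q (i + 2)) v ∈ serreIdeal q := by
  have hk : q ^ 2 ≠ 0 := pow_ne_zero _ hq
  fin_cases i
  · change qSerre q (LinearMap.mulLeft F (FreeAlgebra.ι F 0))
      (LinearMap.mulLeft F (FreeAlgebra.ι F 1)) v ∈ _
    rw [qSerre_mulLeft]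
    simpa using word_mul_mem_serreIdeal q [] 0 v
  · change qSerre q (skewD ![q ^ 2, (q ^ 2)⁻¹]) (skewD ![(q ^ 2)⁻¹, q ^ 2]) v ∈ _
    rw [qSerre_skewD hq hq2]
    · exact zero_mem _
    · intro j
      fin_cases j <;> (simp [hk]; try ring)
  · change qSerre q (LinearMap.mulLeft F (FreeAlgebra.ι F 1))
      (LinearMap.mulLeft F (FreeAlgebra.ι F 0)) v ∈ _
    rw [qSerre_mulLeft]
    simpa using word_mul_mem_serreIdeal q [] 1 v
  · change qSerre q (skewD ![(q ^ 2)⁻¹, q ^ 2]) (skewD ![q ^ 2, (q ^ 2)⁻¹]) v ∈ _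
    rw [qSerre_skewD hq hq2]
    · exact zero_mem _
    · intro j
      fin_cases j <;> (simp [hk]; try ring)

/-- Images of the free generators of `□̂_q`: the `x_i` act by `opV`, the `c_i^{±1}` as the
identity. -/
def repGen {F : Type*} [Field F] {q : F} (hq : q ≠ 0) (hq2 : q ^ 2 ≠ 1) :
    BHGen → Module.End F (FreeAlgebra F (Fin 2) ⧸ serreIdeal q)
  | Sum.inl i => opV hq hq2 i
  | Sum.inr _ => 1

/-- The representation of `□̂_q` on the quotient of the free algebra by the `q`-Serre ideal in which
`x₀, x₂` act by left multiplication by the two letters, `x₁, x₃` by degree-lowering skew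
derivations, and `c_i^{±1}` as the identity. -/
def rep {F : Type*} [Field F] {q : F} (hq : q ≠ 0) (hq2 : q ^ 2 ≠ 1) :
    BoxH F q →ₐ[F] Module.End F (FreeAlgebra F (Fin 2) ⧸ serreIdeal q) :=
  RingQuot.liftAlgHom F ⟨FreeAlgebra.lift F (repGen hq hq2), by
    intro a b hab
    induction hab with
    | c_cinv i => simp [bhc, bhcinv, repGen]
    | cinv_c i => simp [bhc, bhcinv, repGen]
    | central_c i a => simp [bhc, repGen]
    | central_cinv i a => simp [bhcinv, repGen]
    | weyl i =>
      have hne : q - q⁻¹ ≠ 0 := by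
        intro h0
        apply hq2
        have h2 := congrArg (q * ·) h0
        simpa [mul_sub, hq, pow_two, sub_eq_zero] using h2
      have hV (i : Fin 4) : q • (opV hq hq2 i * opV hq hq2 (i + 1))
          - q⁻¹ • (opV hq hq2 (i + 1) * opV hq hq2 i) = (q - q⁻¹) • 1 := by
        refine Submodule.linearMap_qext _ (LinearMap.ext fun v => ?_)
        exact congrArg (fun T => Submodule.Quotient.mk (p := serreIdeal q) (T v)) (opS_weyl hq i)
      simp only [bhx, bhc, map_smul, map_sub, map_mul, FreeAlgebra.lift_ι_apply, repGen]
      exact (congrArg _ (hV i)).trans (inv_smul_smul₀ hne _)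
    | serre i =>
      have hV (i : Fin 4) : qSerre q (opV hq hq2 i) (opV hq hq2 (i + 2)) = 0 := by
        refine Submodule.linearMap_qext _ (LinearMap.ext fun v => ?_)
        exact (Submodule.Quotient.mk_eq_zero _).mpr (opS_serre hq hq2 i v)
      rw [map_zero]
      refine Eq.trans ?_ (hV i)
      change _ = qSerre q (opV hq hq2 i) (repGen hq hq2 (Sum.inl (i + 2)))
      simp [qSerre, bhx, repGen]⟩

lemma rep_xH {F : Type*} [Field F] {q : F} (hq : q ≠ 0) (hq2 : q ^ 2 ≠ 1) (i : ZMod 4) :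
    rep hq hq2 (xH F q i) = opV hq hq2 i := by
  simp [rep, xH, bhx, repGen]

/-- Elements of `Ĉ` act as scalars. -/
lemma rep_scalar {F : Type*} [Field F] {q : F} (hq : q ≠ 0) (hq2 : q ^ 2 ≠ 1) {α : BoxH F q}
    (h : α ∈ Algebra.adjoin F (Set.range (cH F q) ∪ Set.range (cinvH F q))) :
    ∃ a : F, rep hq hq2 α = algebraMap F _ a := by
  have hle : Algebra.adjoin F (Set.range (cH F q) ∪ Set.range (cinvH F q)) ≤
      (⊥ : Subalgebra F (Module.End F (FreeAlgebra F (Fin 2) ⧸ serreIdeal q))).comap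
        (rep hq hq2) := by
    refine Algebra.adjoin_le ?_
    rintro _ (⟨i, rfl⟩ | ⟨i, rfl⟩)
    · have : rep hq hq2 (cH F q i) = 1 := by simp [rep, cH, bhc, repGen]
      exact Algebra.mem_bot.mpr ⟨1, by simp [this]⟩
    · have : rep hq hq2 (cinvH F q i) = 1 := by simp [rep, cinvH, bhcinv, repGen]
      exact Algebra.mem_bot.mpr ⟨1, by simp [this]⟩
  obtain ⟨a, ha⟩ := Algebra.mem_bot.mp (hle h)
  exact ⟨a, ha.symm⟩

/-- Right-invertible elements of `Ĉ` act as nonzero scalars. -/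
lemma rep_scalar_ne_zero {F : Type*} [Field F] {q : F} (hq : q ≠ 0) (hq2 : q ^ 2 ≠ 1)
    {α β : BoxH F q}
    (h : α ∈ Algebra.adjoin F (Set.range (cH F q) ∪ Set.range (cinvH F q)))
    (hu : α * β = 1) : ∃ a : F, a ≠ 0 ∧ rep hq hq2 α = algebraMap F _ a := by
  obtain ⟨a, ha⟩ := rep_scalar hq hq2 h
  by_cases h0 : a = 0
  · -- Then `1 = 0` in the endomorphism ring, so that every scalar represents `α`.
    have h1 := congrArg (rep hq hq2) hu
    rw [map_mul, ha, h0, map_zero, zero_mul, map_one] at h1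
    exact ⟨1, one_ne_zero, (subsingleton_of_zero_eq_one h1).elim _ _⟩
  · exact ⟨a, h0, ha⟩

/-! ### Leading terms -/

/-- The product of the weights `a` of the letters of a word. -/
def wt {F : Type*} [Field F] (a : Fin 2 → F) (l : List (Fin 2)) : F := (l.map a).prod

/-- The homomorphism recording degrees by a variable `t`, while rescaling the letter `i` by
`(a i)⁻¹`. -/
def gr {F : Type*} [Field F] (a : Fin 2 → F) :
    FreeAlgebra F (Fin 2) →ₐ[F] Polynomial (FreeAlgebra F (Fin 2)) :=
  FreeAlgebra.lift F fun i => Polynomial.monomial 1 ((a i)⁻¹ • FreeAlgebra.ι F i)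

/-- The rescaled homogeneous component of degree `n`. -/
def comp {F : Type*} [Field F] (a : Fin 2 → F) (n : ℕ) : Module.End F (FreeAlgebra F (Fin 2)) where
  toFun v := (gr a v).coeff n
  map_add' := by simp
  map_smul' := by simp

lemma gr_word {F : Type*} [Field F] (a : Fin 2 → F) (l : List (Fin 2)) :
    gr a (word F l) = Polynomial.monomial l.length ((wt a l)⁻¹ • word F l) := by
  induction l with
  | nil => simp [wt]
  | cons i l ih =>
    rw [word_cons, map_mul, ih]
    simp [gr, wt, Polynomial.monomial_mul_monomial, smul_smul, mul_comm, add_comm]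

lemma comp_Flt {F : Type*} [Field F] (a : Fin 2 → F) {n : ℕ} {v : FreeAlgebra F (Fin 2)}
    (hv : v ∈ Flt F n) : comp a n v = 0 := by
  have : Flt F n ≤ LinearMap.ker (comp a n) := by
    refine Flt_le fun l hl => ?_
    change (gr a (word F l)).coeff n = 0
    rw [gr_word, Polynomial.coeff_monomial, if_neg hl.ne]
  exact this hv

/-- A `q`-Serre expression is homogeneous of degree `4`, and rescaling the letters multiplies it by
a scalar. -/
lemma gr_qSerre {F : Type*} [Field F] (a : Fin 2 → F) (q : F) (j : Fin 2) :
    ∃ r : F, gr a (qSerre q (FreeAlgebra.ι F j) (FreeAlgebra.ι F (j + 1))) =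
      Polynomial.monomial 4 (r • qSerre q (FreeAlgebra.ι F j) (FreeAlgebra.ι F (j + 1))) := by
  refine ⟨(a j)⁻¹ ^ 3 * (a (j + 1))⁻¹, ?_⟩
  have h (i : Fin 2) : gr a (FreeAlgebra.ι F i) =
      Polynomial.monomial 1 ((a i)⁻¹ • FreeAlgebra.ι F i) := by simp [gr]
  simp only [qSerre, map_sub, map_add, map_mul, map_pow, map_smul, h, Polynomial.monomial_pow,
    Polynomial.monomial_mul_monomial, Polynomial.smul_monomial, smul_sub, smul_add, smul_pow,
    smul_mul_smul_comm, smul_smul]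
  norm_num
  match_scalars <;> ring

/-- Both `q`-Dolan/Grady relations at once. -/
lemma Onsager_qSerre {F : Type*} [Field F] (q : F) (j : Fin 2) :
    RingQuot.mkAlgHom F (OnsagerRel F q)
        (qSerre q (FreeAlgebra.ι F j) (FreeAlgebra.ι F (j + 1))) =
      RingQuot.mkAlgHom F (OnsagerRel F q) (((q ^ 2 - q⁻¹ ^ 2) ^ 2) •
        (FreeAlgebra.ι F (j + 1) * FreeAlgebra.ι F j
          - FreeAlgebra.ι F j * FreeAlgebra.ι F (j + 1))) := by
  fin_cases j
  · exact RingQuot.mkAlgHom_rel F OnsagerRel.DG1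
  · exact RingQuot.mkAlgHom_rel F OnsagerRel.DG2

/-- The `q`-Dolan/Grady relations rewrite a `q`-Serre expression, of degree `4`, in degree `2`.
Hence the components of elements of the `q`-Serre ideal can be lowered in degree in `O_q`. -/
lemma comp_serreIdeal {F : Type*} [Field F] (a : Fin 2 → F) (q : F) (n : ℕ)
    {z : FreeAlgebra F (Fin 2)} (hz : z ∈ serreIdeal q) :
    RingQuot.mkAlgHom F (OnsagerRel F q) (comp a n z) ∈
      (Flt F n).map (RingQuot.mkAlgHom F (OnsagerRel F q)).toLinearMap := by
  have : serreIdeal q ≤ ((Flt F n).map (RingQuot.mkAlgHom F (OnsagerRel F q)).toLinearMap).comap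
      ((RingQuot.mkAlgHom F (OnsagerRel F q)).toLinearMap ∘ₗ comp a n) := by
    rw [serreIdeal, Submodule.span_le]
    rintro _ ⟨⟨l, j, l'⟩, rfl⟩
    obtain ⟨r, hr⟩ := gr_qSerre a q j
    change RingQuot.mkAlgHom F (OnsagerRel F q) ((gr a (word F l *
      qSerre q (FreeAlgebra.ι F j) (FreeAlgebra.ι F (j + 1)) * word F l')).coeff n) ∈
        (Flt F n).map (RingQuot.mkAlgHom F (OnsagerRel F q)).toLinearMap
    rw [map_mul, map_mul, hr, gr_word, gr_word, Polynomial.monomial_mul_monomial,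
      Polynomial.monomial_mul_monomial, Polynomial.coeff_monomial]
    split_ifs with hn
    · simp only [smul_mul_assoc, mul_smul_comm, map_smul]
      refine Submodule.smul_mem _ (wt a l')⁻¹ (Submodule.smul_mem _ r
        (Submodule.smul_mem _ (wt a l)⁻¹ ?_))
      rw [map_mul, map_mul, Onsager_qSerre, ← map_mul, ← map_mul]
      refine ⟨_, ?_, rfl⟩
      have h1 : word F (l ++ (j + 1) :: j :: l') ∈ Flt F n :=
        word_mem_Flt (by simp; omega)
      have h2 : word F (l ++ j :: (j + 1) :: l') ∈ Flt F n :=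
        word_mem_Flt (by simp; omega)
      have h3 := Submodule.smul_mem _ ((q ^ 2 - q⁻¹ ^ 2) ^ 2) (sub_mem h1 h2)
      simpa [mul_sub, sub_mul, mul_assoc] using h3
    · simp
  exact this hz

/-- The two operators `a i • (letter i) + b i • D_i`, representing the images of `A` and `B`. -/
def opAB {F : Type*} [Field F] (a b : Fin 2 → F) (κ : Fin 2 → Fin 2 → F) :
    FreeAlgebra F (Fin 2) →ₐ[F] Module.End F (FreeAlgebra F (Fin 2)) :=
  FreeAlgebra.lift F fun i =>
    a i • LinearMap.mulLeft F (FreeAlgebra.ι F i) + b i • skewD (κ i)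

/-- Applied to `1`, a word in the operators `opAB` gives a scalar multiple of the same word, plus
terms of lower degree. -/
lemma opAB_word {F : Type*} [Field F] (a b : Fin 2 → F) (κ : Fin 2 → Fin 2 → F)
    (l : List (Fin 2)) :
    opAB a b κ (word F l) 1 - wt a l • word F l ∈ Flt F l.length := by
  induction l with
  | nil => simp [wt]
  | cons i l ih =>
    set v := opAB a b κ (word F l) 1 with hv
    have h1 : opAB a b κ (word F (i :: l)) 1 =
        a i • (FreeAlgebra.ι F i * v) + b i • skewD (κ i) v := by
      simp [opAB, Module.End.mul_apply, hv]
    have hv' : v ∈ Flt F (l.length + 1) := by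
      have := add_mem (Flt_mono (Nat.le_succ _) ih)
        (Submodule.smul_mem _ (wt a l) (word_mem_Flt (F := F) (Nat.lt_succ_self l.length)))
      simpa using this
    have h2 : opAB a b κ (word F (i :: l)) 1 - wt a (i :: l) • word F (i :: l) =
        a i • (FreeAlgebra.ι F i * (v - wt a l • word F l)) + b i • skewD (κ i) v := by
      rw [h1, word_cons, mul_sub, mul_smul_comm, smul_sub, smul_smul]
      simp only [wt, List.map_cons, List.prod_cons]
      abel
    rw [h2, List.length_cons]
    exact add_mem (Submodule.smul_mem _ _ (ι_mul_mem_Flt i ih))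
      (Submodule.smul_mem _ _ (Flt_mono (Nat.le_succ _) (skewD_mem_Flt (κ i) hv')))

/-- The component of degree `n` of `p(A, B) 1` recovers, after rescaling, that of `p`
when `p` has degree at most `n`. -/
lemma sub_comp_opAB_mem {F : Type*} [Field F] {a : Fin 2 → F} (ha : ∀ i, a i ≠ 0) (b : Fin 2 → F)
    (κ : Fin 2 → Fin 2 → F) {n : ℕ} {p : FreeAlgebra F (Fin 2)} (hp : p ∈ Flt F (n + 1)) :
    p - comp a n (opAB a b κ p 1) ∈ Flt F n := by
  have : Flt F (n + 1) ≤ (Flt F n).comap (LinearMap.id - comp a n ∘ₗ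
      LinearMap.applyₗ (1 : FreeAlgebra F (Fin 2)) ∘ₗ (opAB a b κ).toLinearMap) := by
    refine Flt_le fun l hl => ?_
    change word F l - comp a n (opAB a b κ (word F l) 1) ∈ Flt F n
    have h0 := opAB_word a b κ l
    rcases Nat.lt_succ_iff_lt_or_eq.mp hl with hlt | rfl
    · have h1 := add_mem (Flt_mono hlt.le h0) (Submodule.smul_mem _ (wt a l) (word_mem_Flt hlt))
      rw [sub_add_cancel] at h1
      rw [comp_Flt a h1, sub_zero]
      exact word_mem_Flt hlt
    · have h1 := comp_Flt a h0
      have hwt : wt a l ≠ 0 := by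
        simp only [wt, ne_eq, List.prod_eq_zero_iff, List.mem_map, not_exists, not_and]
        exact fun i _ => ha i
      have h2 : comp a l.length (word F l) = (wt a l)⁻¹ • word F l := by
        change (gr a (word F l)).coeff _ = _
        rw [gr_word, Polynomial.coeff_monomial, if_pos rfl]
      rw [map_sub, map_smul, h2, smul_inv_smul₀ hwt, sub_eq_zero] at h1
      rw [h1, sub_self]
      exact zero_mem _
  exact this hp

/-! ### Injectivity -/

/-- Theorem 10.30: the homomorphism `♮ : O_q → □̂_q` sending `A ↦ α₀x₀ + α₁x₁` and
`B ↦ α₂x₂ + α₃x₃` is injective. -/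
theorem stmt13 (F : Type*) [Field F] (q : F) (hq : q ≠ 0) (hq2 : q ^ 2 ≠ 1)
    (α0 α1 α2 α3 : BoxH F q)
    (h0 : α0 ∈ Algebra.adjoin F (Set.range (cH F q) ∪ Set.range (cinvH F q)))
    (h1 : α1 ∈ Algebra.adjoin F (Set.range (cH F q) ∪ Set.range (cinvH F q)))
    (h2 : α2 ∈ Algebra.adjoin F (Set.range (cH F q) ∪ Set.range (cinvH F q)))
    (h3 : α3 ∈ Algebra.adjoin F (Set.range (cH F q) ∪ Set.range (cinvH F q)))
    (hc0 : α0 * α1 * cH F q 0 = 1) (hc2 : α2 * α3 * cH F q 2 = 1)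
    (f : Onsager F q →ₐ[F] BoxH F q)
    (hfA : f (Ag F q) = α0 * xH F q 0 + α1 * xH F q 1)
    (hfB : f (Bg F q) = α2 * xH F q 2 + α3 * xH F q 3) :
    Function.Injective f := by
  obtain ⟨a0, ha0, hα0⟩ := rep_scalar_ne_zero hq hq2 h0 (by rw [← mul_assoc]; exact hc0)
  obtain ⟨a1, hα1⟩ := rep_scalar hq hq2 h1
  obtain ⟨a2, ha2, hα2⟩ := rep_scalar_ne_zero hq hq2 h2 (by rw [← mul_assoc]; exact hc2)
  obtain ⟨a3, hα3⟩ := rep_scalar hq hq2 h3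
  set π := RingQuot.mkAlgHom F (OnsagerRel F q) with hπ
  set T := opAB ![a0, a2] ![a1, a3] ![![q ^ 2, (q ^ 2)⁻¹], ![(q ^ 2)⁻¹, q ^ 2]] with hT
  have ha : ∀ i, (![a0, a2] : Fin 2 → F) i ≠ 0 := by
    intro i
    fin_cases i
    · exact ha0
    · exact ha2
  have hrep (p : FreeAlgebra F (Fin 2)) : ∀ v : FreeAlgebra F (Fin 2),
      rep hq hq2 (f (π p)) (Submodule.Quotient.mk v) = Submodule.Quotient.mk (T p v) := by
    induction p using FreeAlgebra.induction with
    | grade0 r => intro v; simp [Algebra.algebraMap_eq_smul_one]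
    | grade1 i =>
      intro v
      fin_cases i
      · have h : f (π (FreeAlgebra.ι F 0)) = α0 * xH F q 0 + α1 * xH F q 1 := hfA
        change rep hq hq2 (f (π (FreeAlgebra.ι F 0))) _ = _
        rw [h, map_add, map_mul, map_mul, hα0, hα1, rep_xH, rep_xH, hT, opAB]
        simp only [FreeAlgebra.lift_ι_apply]
        rfl
      · have h : f (π (FreeAlgebra.ι F 1)) = α2 * xH F q 2 + α3 * xH F q 3 := hfB
        change rep hq hq2 (f (π (FreeAlgebra.ι F 1))) _ = _
        rw [h, map_add, map_mul, map_mul, hα2, hα3, rep_xH, rep_xH, hT, opAB]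
        simp only [FreeAlgebra.lift_ι_apply]
        rfl
    | mul x y hx hy => intro v; simp [Module.End.mul_apply, hx, hy]
    | add x y hx hy => intro v; simp [hx, hy]
  have key (n : ℕ) : ∀ p ∈ Flt F n, f (π p) = 0 → π p = 0 := by
    induction n with
    | zero =>
      intro p hp _
      have hp0 : p = 0 := by simpa [Flt] using hp
      rw [hp0, map_zero]
    | succ n ih =>
      intro p hp hfp
      have hI : T p 1 ∈ serreIdeal q := by
        rw [← Submodule.Quotient.mk_eq_zero, ← hrep, hfp, map_zero, LinearMap.zero_apply]
      obtain ⟨r, hr, hr'⟩ := comp_serreIdeal ![a0, a2] q n hI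
      have hs := sub_comp_opAB_mem ha ![a1, a3]
        ![![q ^ 2, (q ^ 2)⁻¹], ![(q ^ 2)⁻¹, q ^ 2]] hp
      -- `p` agrees in `O_q` with an element of smaller degree.
      have heq : π p = π (p - comp ![a0, a2] n (T p 1) + r) := by
        rw [map_add, map_sub]
        have : π r = π (comp ![a0, a2] n (T p 1)) := hr'
        rw [this, sub_add_cancel]
      rw [heq]
      exact ih _ (add_mem hs hr) (by rw [← heq, hfp])
  rw [injective_iff_map_eq_zero]
  intro y hy
  obtain ⟨p, rfl⟩ := RingQuot.mkAlgHom_surjective F (OnsagerRel F q) y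
  obtain ⟨n, hn⟩ := exists_mem_Flt p
  exact key n p hn hy
end
end
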